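/- In the algebra SLF(Ū_q) with convolution product, G_s G_t = 0 for all 1 ≤ s, t ≤ p−1. -/

import Mathlib

noncomputable section

open scoped TensorProduct

namespace Uqsl2

/-- Generators of the restricted quantum group. -/
inductive gen : Type | E | F | K | Kinv

/-- The primitive `2p`-th root of unity `q = e^{iπ/p}`. -/
def q (p : ℕ) : ℂ := Complex.exp (Real.pi * Complex.I / p)

/-- The `q`-integer `[n] = (q^n - q^{-n})/(q - q^{-1})`. -/
def qi (p : ℕ) (n : ℤ) : ℂ := (q p ^ n - q p ^ (-n)) / (q p - (q p)⁻¹)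

/-- The `q`-factorial `[m]!`. -/
def qfact (p m : ℕ) : ℂ := ∏ i ∈ Finset.range m, qi p (i + 1)

open FreeAlgebra in
/-- The defining relations of `Ū_q(sl₂)`. -/
inductive rel (p : ℕ) : FreeAlgebra ℂ gen → FreeAlgebra ℂ gen → Prop
  | KKinv : rel p (ι ℂ gen.K * ι ℂ gen.Kinv) 1
  | KinvK : rel p (ι ℂ gen.Kinv * ι ℂ gen.K) 1
  | Ep : rel p (ι ℂ gen.E ^ p) 0
  | Fp : rel p (ι ℂ gen.F ^ p) 0
  | K2p : rel p (ι ℂ gen.K ^ (2 * p)) 1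
  | KE : rel p (ι ℂ gen.K * ι ℂ gen.E) (q p ^ 2 • (ι ℂ gen.E * ι ℂ gen.K))
  | KF : rel p (ι ℂ gen.K * ι ℂ gen.F) ((q p ^ 2)⁻¹ • (ι ℂ gen.F * ι ℂ gen.K))
  | EF : rel p (ι ℂ gen.E * ι ℂ gen.F - ι ℂ gen.F * ι ℂ gen.E)
             ((q p - (q p)⁻¹)⁻¹ • (ι ℂ gen.K - ι ℂ gen.Kinv))

/-- The restricted quantum group `Ū_q(sl₂)`, presented by generators and relations. -/
abbrev Uq (p : ℕ) := RingQuot (rel p)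

def EE (p : ℕ) : Uq p := RingQuot.mkAlgHom ℂ (rel p) (FreeAlgebra.ι ℂ gen.E)
def FF (p : ℕ) : Uq p := RingQuot.mkAlgHom ℂ (rel p) (FreeAlgebra.ι ℂ gen.F)
def KK (p : ℕ) : Uq p := RingQuot.mkAlgHom ℂ (rel p) (FreeAlgebra.ι ℂ gen.K)
def KKinv (p : ℕ) : Uq p := RingQuot.mkAlgHom ℂ (rel p) (FreeAlgebra.ι ℂ gen.Kinv)

/-! ### The simple modules `X^α(s)` as matrix representations -/

/-- Matrix of `K` on `X^α(s)` in the canonical basis. -/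
def XK (p : ℕ) (α : ℂ) (s : ℕ) : Matrix (Fin s) (Fin s) ℂ :=
  Matrix.diagonal fun i => α * q p ^ ((s : ℤ) - 1 - 2 * (i : ℕ))

/-- Matrix of `E` on `X^α(s)` in the canonical basis. -/
def XE (p : ℕ) (α : ℂ) (s : ℕ) : Matrix (Fin s) (Fin s) ℂ :=
  Matrix.of fun i j =>
    if (i : ℕ) + 1 = (j : ℕ) then α * qi p (j : ℕ) * qi p ((s : ℤ) - (j : ℕ)) else 0

/-- Matrix of `F` on `X^α(s)` in the canonical basis. -/
def XF (s : ℕ) : Matrix (Fin s) (Fin s) ℂ :=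
  Matrix.of fun i j => if (i : ℕ) = (j : ℕ) + 1 then (1 : ℂ) else 0

/-- The statement that `ρX α s` is the representation on `X^α(s)` for the relevant
values of `α` and `s`. -/
def IsXRep (p : ℕ) (ρX : (α : ℂ) → (s : ℕ) → (Uq p →ₐ[ℂ] Matrix (Fin s) (Fin s) ℂ)) : Prop :=
  ∀ α : ℂ, (α = 1 ∨ α = -1) → ∀ s : ℕ, 1 ≤ s → s ≤ p →
    ρX α s (KK p) = XK p α s ∧ ρX α s (EE p) = XE p α s ∧ ρX α s (FF p) = XF s

/-! ### The projective modules `P^α(s)` as matrix representations -/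

/-- Index for the standard basis `(b_i, x_j, y_k, a_l)` of `P^α(s)`. -/
abbrev PIdx (p s : ℕ) := Fin s ⊕ (Fin (p - s) ⊕ (Fin (p - s) ⊕ Fin s))

/-- Diagonal of the matrix of `K` on `P^α(s)`. -/
def PKdiag (p : ℕ) (α : ℂ) (s : ℕ) : PIdx p s → ℂ
  | .inl i => α * q p ^ ((s : ℤ) - 1 - 2 * (i : ℕ))
  | .inr (.inl j) => -α * q p ^ ((p : ℤ) - s - 1 - 2 * (j : ℕ))
  | .inr (.inr (.inl k)) => -α * q p ^ ((p : ℤ) - s - 1 - 2 * (k : ℕ))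
  | .inr (.inr (.inr l)) => α * q p ^ ((s : ℤ) - 1 - 2 * (l : ℕ))

/-- Matrix of `K` on `P^α(s)` in the standard basis. -/
def PK (p : ℕ) (α : ℂ) (s : ℕ) : Matrix (PIdx p s) (PIdx p s) ℂ :=
  Matrix.diagonal (PKdiag p α s)

/-- Matrix of `E` on `P^α(s)` in the standard basis. -/
def PE (p : ℕ) (α : ℂ) (s : ℕ) : Matrix (PIdx p s) (PIdx p s) ℂ :=
  Matrix.of fun i j =>
    match i, j with
    | .inl i, .inl j =>
        if (i : ℕ) + 1 = (j : ℕ) then α * qi p (j : ℕ) * qi p ((s : ℤ) - (j : ℕ)) else 0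
    | .inr (.inl jx), .inl j => if (j : ℕ) = 0 ∧ (jx : ℕ) + 1 = p - s then 1 else 0
    | .inr (.inr (.inr l)), .inl j => if (l : ℕ) + 1 = (j : ℕ) then 1 else 0
    | .inr (.inl i), .inr (.inl j) =>
        if (i : ℕ) + 1 = (j : ℕ) then -α * qi p (j : ℕ) * qi p ((p : ℤ) - s - (j : ℕ)) else 0
    | .inr (.inr (.inl i)), .inr (.inr (.inl k)) =>
        if (i : ℕ) + 1 = (k : ℕ) then -α * qi p (k : ℕ) * qi p ((p : ℤ) - s - (k : ℕ)) else 0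
    | .inr (.inr (.inr l)), .inr (.inr (.inl k)) =>
        if (k : ℕ) = 0 ∧ (l : ℕ) + 1 = s then 1 else 0
    | .inr (.inr (.inr i)), .inr (.inr (.inr l)) =>
        if (i : ℕ) + 1 = (l : ℕ) then α * qi p (l : ℕ) * qi p ((s : ℤ) - (l : ℕ)) else 0
    | _, _ => 0

/-- Matrix of `F` on `P^α(s)` in the standard basis. -/
def PF (p s : ℕ) : Matrix (PIdx p s) (PIdx p s) ℂ :=
  Matrix.of fun i j =>
    match i, j with
    | .inl i, .inl j => if (i : ℕ) = (j : ℕ) + 1 then (1 : ℂ) else 0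
    | .inr (.inr (.inl k)), .inl j => if (j : ℕ) + 1 = s ∧ (k : ℕ) = 0 then 1 else 0
    | .inr (.inl i), .inr (.inl j) => if (i : ℕ) = (j : ℕ) + 1 then 1 else 0
    | .inr (.inr (.inr l)), .inr (.inl j) => if (j : ℕ) + 1 = p - s ∧ (l : ℕ) = 0 then 1 else 0
    | .inr (.inr (.inl i)), .inr (.inr (.inl k)) => if (i : ℕ) = (k : ℕ) + 1 then 1 else 0
    | .inr (.inr (.inr i)), .inr (.inr (.inr l)) => if (i : ℕ) = (l : ℕ) + 1 then 1 else 0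
    | _, _ => 0

/-- The statement that `ρP α s` is the representation on `P^α(s)` for the relevant
values of `α` and `s`. -/
def IsPRep (p : ℕ)
    (ρP : (α : ℂ) → (s : ℕ) → (Uq p →ₐ[ℂ] Matrix (PIdx p s) (PIdx p s) ℂ)) : Prop :=
  ∀ α : ℂ, (α = 1 ∨ α = -1) → ∀ s : ℕ, 1 ≤ s → s ≤ p - 1 →
    ρP α s (KK p) = PK p α s ∧ ρP α s (EE p) = PE p α s ∧ ρP α s (FF p) = PF p s

/-! ### Symmetric linear forms, characters, and the forms `G_s` -/

/-- Symmetric linear forms. -/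
def IsSLF (p : ℕ) (φ : Uq p →ₗ[ℂ] ℂ) : Prop := ∀ x y : Uq p, φ (x * y) = φ (y * x)

/-- The character of a matrix representation. -/
def chiOf (p : ℕ) {n : Type} [Fintype n] [DecidableEq n]
    (ρ : Uq p →ₐ[ℂ] Matrix n n ℂ) : Uq p →ₗ[ℂ] ℂ :=
  (Matrix.traceLinearMap n ℂ ℂ).comp ρ.toLinearMap

/-- The matrix entry functional. -/
def entry {n : Type} (i j : n) : Matrix n n ℂ →ₗ[ℂ] ℂ where
  toFun M := M i j
  map_add' _ _ := rfl
  map_smul' _ _ := rfl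

/-- The symmetric linear form `G_s = tr H^+_s + tr H^-_{p-s}`. -/
def GOf (p : ℕ)
    (ρP : (α : ℂ) → (s : ℕ) → (Uq p →ₐ[ℂ] Matrix (PIdx p s) (PIdx p s) ℂ))
    (s : ℕ) : Uq p →ₗ[ℂ] ℂ :=
  (∑ i : Fin s,
    (entry (Sum.inr (Sum.inr (Sum.inr i))) (Sum.inl i)).comp (ρP 1 s).toLinearMap) +
  (∑ j : Fin (p - s),
    (entry (Sum.inr (Sum.inr (Sum.inr j))) (Sum.inl j)).comp (ρP (-1) (p - s)).toLinearMap)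

/-! ### Convolution product -/

/-- The convolution product of two linear forms, with respect to a comultiplication `Δ`. -/
def conv (p : ℕ) (Δ : Uq p →ₐ[ℂ] (Uq p ⊗[ℂ] Uq p)) (φ ψ : Uq p →ₗ[ℂ] ℂ) :
    Uq p →ₗ[ℂ] ℂ :=
  (LinearMap.mul' ℂ ℂ).comp ((TensorProduct.map φ ψ).comp Δ.toLinearMap)

/-- The statement that `Δ` is the comultiplication of `Ū_q(sl₂)`. -/
def IsCoprod (p : ℕ) (Δ : Uq p →ₐ[ℂ] (Uq p ⊗[ℂ] Uq p)) : Prop :=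
  Δ (EE p) = 1 ⊗ₜ[ℂ] EE p + EE p ⊗ₜ[ℂ] KK p ∧
  Δ (FF p) = FF p ⊗ₜ[ℂ] 1 + KKinv p ⊗ₜ[ℂ] FF p ∧
  Δ (KK p) = KK p ⊗ₜ[ℂ] KK p ∧
  Δ (KKinv p) = KKinv p ⊗ₜ[ℂ] KKinv p

/-! ### Facts on `q` -/

lemma q_prim (p : ℕ) (hp : 2 ≤ p) : IsPrimitiveRoot (q p) (2 * p) := by
  have h := Complex.isPrimitiveRoot_exp (2 * p) (by omega)
  have e : q p = Complex.exp (2 * Real.pi * Complex.I / ((2 * p : ℕ) : ℂ)) := by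
    unfold q
    congr 1
    push_cast
    have : (p : ℂ) ≠ 0 := by exact_mod_cast (by omega : p ≠ 0)
    field_simp
  rw [e]; exact h

lemma q_ne (p : ℕ) : q p ≠ 0 := Complex.exp_ne_zero _

lemma q_pow_p (p : ℕ) (hp : 2 ≤ p) : q p ^ (p : ℤ) = -1 := by
  have : (p : ℂ) ≠ 0 := by exact_mod_cast (by omega : p ≠ 0)
  rw [zpow_natCast, q, ← Complex.exp_nat_mul, mul_div_cancel₀ _ this, Complex.exp_pi_mul_I]

lemma q_two_zpow (p : ℕ) (hp : 2 ≤ p) (j : ℤ) : q p ^ (2 * j) = 1 ↔ (p : ℤ) ∣ j := by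
  rw [(q_prim p hp).zpow_eq_one_iff_dvd]
  push_cast
  exact mul_dvd_mul_iff_left (by norm_num)

lemma q_sub_inv (p : ℕ) (hp : 2 ≤ p) : q p - (q p)⁻¹ ≠ 0 := by
  intro h
  have h1 : q p ^ (2 * (1 : ℤ)) = 1 := by
    have := q_ne p
    have h2 : q p = (q p)⁻¹ := sub_eq_zero.mp h
    rw [mul_one, zpow_two]
    nth_rewrite 1 [h2]
    exact inv_mul_cancel₀ this
  rw [q_two_zpow p hp] at h1
  have := Int.le_of_dvd one_pos h1
  omega

/-! ### Relations -/

lemma KKinv_mul (p : ℕ) : KK p * KKinv p = 1 := by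
  simpa [KK, KKinv] using RingQuot.mkAlgHom_rel ℂ (rel.KKinv (p := p))
lemma Kinv_mul (p : ℕ) : KKinv p * KK p = 1 := by
  simpa [KK, KKinv] using RingQuot.mkAlgHom_rel ℂ (rel.KinvK (p := p))
lemma E_pow (p : ℕ) : EE p ^ p = 0 := by
  simpa [EE] using RingQuot.mkAlgHom_rel ℂ (rel.Ep (p := p))
lemma F_pow (p : ℕ) : FF p ^ p = 0 := by
  simpa [FF] using RingQuot.mkAlgHom_rel ℂ (rel.Fp (p := p))
lemma K_pow (p : ℕ) : KK p ^ (2 * p) = 1 := by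
  simpa [KK] using RingQuot.mkAlgHom_rel ℂ (rel.K2p (p := p))
lemma KE (p : ℕ) : KK p * EE p = q p ^ 2 • (EE p * KK p) := by
  simpa [KK, EE] using RingQuot.mkAlgHom_rel ℂ (rel.KE (p := p))
lemma KF (p : ℕ) : KK p * FF p = (q p ^ 2)⁻¹ • (FF p * KK p) := by
  simpa [KK, FF] using RingQuot.mkAlgHom_rel ℂ (rel.KF (p := p))
lemma EF (p : ℕ) : EE p * FF p - FF p * EE p = (q p - (q p)⁻¹)⁻¹ • (KK p - KKinv p) := by
  simpa [KK, KKinv, EE, FF] using RingQuot.mkAlgHom_rel ℂ (rel.EF (p := p))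

/-- `K` as a unit. -/
def Ku (p : ℕ) : (Uq p)ˣ := ⟨KK p, KKinv p, KKinv_mul p, Kinv_mul p⟩

/-- Integer powers of `K`. -/
def Kz (p : ℕ) (j : ℤ) : Uq p := ((Ku p ^ j : (Uq p)ˣ) : Uq p)

lemma Kz_add (p : ℕ) (a b : ℤ) : Kz p (a + b) = Kz p a * Kz p b := by
  simp [Kz, zpow_add]
lemma Kz_zero (p : ℕ) : Kz p 0 = 1 := by simp [Kz]
lemma Kz_one (p : ℕ) : Kz p 1 = KK p := by simp [Kz, Ku]
lemma Kz_neg_one (p : ℕ) : Kz p (-1) = KKinv p := by simp [Kz, Ku]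
lemma Kz_comm (p : ℕ) (a b : ℤ) : Kz p a * Kz p b = Kz p b * Kz p a := by
  rw [← Kz_add, ← Kz_add, add_comm]
lemma Kz_nat (p : ℕ) (n : ℕ) : Kz p n = KK p ^ n := by simp [Kz, Ku]

lemma Kz_q_comm (p : ℕ) (x : Uq p) (c : ℂ) (hc : c ≠ 0) (h : KK p * x = c • (x * KK p))
    (j : ℤ) : Kz p j * x = c ^ j • (x * Kz p j) := by
  have h' : KKinv p * x = c⁻¹ • (x * KKinv p) := by
    have : KKinv p * (KK p * x) * KKinv p = KKinv p * (c • (x * KK p)) * KKinv p := by rw [h]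
    rw [← mul_assoc, Kinv_mul, one_mul, mul_smul_comm, smul_mul_assoc, mul_assoc, mul_assoc,
      KKinv_mul, mul_one] at this
    rw [this, smul_smul, inv_mul_cancel₀ hc, one_smul]
  induction j with
  | zero => simp [Kz_zero]
  | succ i ih =>
    rw [Kz_add, Kz_one, mul_assoc, h, mul_smul_comm, ← mul_assoc, ih, smul_mul_assoc, smul_smul,
      zpow_add_one₀ hc, mul_assoc, mul_comm c]
  | pred i ih =>
    rw [sub_eq_add_neg, Kz_add, Kz_neg_one, mul_assoc, h', mul_smul_comm, ← mul_assoc, ih,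
      smul_mul_assoc, smul_smul, ← sub_eq_add_neg, zpow_sub_one₀ hc, mul_assoc, mul_comm c⁻¹]

lemma Kz_E (p : ℕ) (j : ℤ) : Kz p j * EE p = q p ^ (2 * j) • (EE p * Kz p j) := by
  rw [Kz_q_comm p (EE p) (q p ^ 2) (pow_ne_zero _ (q_ne p)) (KE p), zpow_mul]; rfl

lemma Kz_F (p : ℕ) (j : ℤ) : Kz p j * FF p = q p ^ (-2 * j) • (FF p * Kz p j) := by
  rw [Kz_q_comm p (FF p) (q p ^ 2)⁻¹ (inv_ne_zero (pow_ne_zero _ (q_ne p))) (KF p), zpow_mul,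
    zpow_neg]; rfl

lemma Kz_Epow (p : ℕ) (j : ℤ) (n : ℕ) :
    Kz p j * EE p ^ n = q p ^ (2 * j * n) • (EE p ^ n * Kz p j) := by
  induction n with
  | zero => simp
  | succ n ih =>
    rw [pow_succ, ← mul_assoc, ih, smul_mul_assoc, mul_assoc (EE p ^ n), Kz_E, mul_smul_comm, smul_smul,
      ← mul_assoc, ← zpow_add₀ (q_ne p)]
    congr 2; push_cast; ring

lemma Kz_Fpow (p : ℕ) (j : ℤ) (n : ℕ) :
    Kz p j * FF p ^ n = q p ^ (-2 * j * n) • (FF p ^ n * Kz p j) := by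
  induction n with
  | zero => simp
  | succ n ih =>
    rw [pow_succ, ← mul_assoc, ih, smul_mul_assoc, mul_assoc (FF p ^ n), Kz_F, mul_smul_comm, smul_smul,
      ← mul_assoc, ← zpow_add₀ (q_ne p)]
    congr 2; push_cast; ring

/-- The constant `(q - q⁻¹)²`. -/
def hh (p : ℕ) : ℂ := (q p - (q p)⁻¹) ^ 2

/-- The (rescaled) Casimir element. -/
def Cas (p : ℕ) : Uq p := hh p • (FF p * EE p) + q p • KK p + (q p)⁻¹ • KKinv p

lemma Cas_eq (p : ℕ) (hp : 2 ≤ p) :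
    Cas p = hh p • (EE p * FF p) + (q p)⁻¹ • KK p + q p • KKinv p := by
  have h := EF p
  have h0 := q_sub_inv p hp
  rw [sub_eq_iff_eq_add] at h
  rw [h, Cas, smul_add, smul_smul, hh,
    show (q p - (q p)⁻¹) ^ 2 * (q p - (q p)⁻¹)⁻¹ = q p - (q p)⁻¹ by field_simp]
  module

lemma hFE (p : ℕ) : hh p • (FF p * EE p) = Cas p - q p • Kz p 1 - (q p)⁻¹ • Kz p (-1) := by
  rw [Cas, Kz_one, Kz_neg_one]; abel

lemma hEF (p : ℕ) (hp : 2 ≤ p) :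
    hh p • (EE p * FF p) = Cas p - (q p)⁻¹ • Kz p 1 - q p • Kz p (-1) := by
  rw [Cas_eq p hp, Kz_one, Kz_neg_one]; abel

lemma hh_ne (p : ℕ) (hp : 2 ≤ p) : hh p ≠ 0 := pow_ne_zero _ (q_sub_inv p hp)

lemma Cas_Kz (p : ℕ) (j : ℤ) : Kz p j * Cas p = Cas p * Kz p j := by
  have h : Kz p j * (FF p * EE p) = FF p * EE p * Kz p j := by
    rw [← mul_assoc, Kz_F, smul_mul_assoc, mul_assoc, Kz_E, mul_smul_comm, smul_smul,
      ← zpow_add₀ (q_ne p), ← mul_assoc]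
    simp
  rw [Cas, ← Kz_one, ← Kz_neg_one]
  simp only [mul_add, add_mul, mul_smul_comm, smul_mul_assoc, h, Kz_comm p j]

lemma Cas_E (p : ℕ) (hp : 2 ≤ p) : Cas p * EE p = EE p * Cas p := by
  nth_rewrite 1 [Cas_eq p hp]
  have := q_ne p
  have e1 : (q p)⁻¹ * q p ^ (2 * (1 : ℤ)) = q p := by
    rw [mul_one, zpow_two]; field_simp
  have e2 : q p * q p ^ (2 * (-1 : ℤ)) = (q p)⁻¹ := by
    rw [show (2 * -1 : ℤ) = -2 by norm_num, zpow_neg, zpow_two]; field_simp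
  rw [Cas, ← Kz_one, ← Kz_neg_one]
  simp only [mul_add, add_mul, mul_smul_comm, smul_mul_assoc, Kz_E, smul_smul, mul_assoc, e1, e2]

lemma Cas_F (p : ℕ) (hp : 2 ≤ p) : Cas p * FF p = FF p * Cas p := by
  nth_rewrite 2 [Cas_eq p hp]
  have := q_ne p
  have e1 : q p * q p ^ (-2 * (1 : ℤ)) = (q p)⁻¹ := by
    rw [mul_one, zpow_neg, zpow_two]; field_simp
  have e2 : (q p)⁻¹ * q p ^ (-2 * (-1 : ℤ)) = q p := by
    rw [show (-2 * -1 : ℤ) = 2 by norm_num, zpow_two]; field_simp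
  rw [Cas, ← Kz_one, ← Kz_neg_one]
  simp only [mul_add, add_mul, mul_smul_comm, smul_mul_assoc, Kz_F, smul_smul, mul_assoc, e1, e2]

lemma Kinv_eq (p : ℕ) (hp : 2 ≤ p) : KKinv p = KK p ^ (2 * p - 1) := by
  have h := K_pow p
  obtain ⟨m, hm⟩ : ∃ m, 2 * p = m + 1 := ⟨2 * p - 1, by omega⟩
  rw [hm] at h ⊢
  rw [pow_succ] at h
  calc KKinv p = (KK p ^ m * KK p) * KKinv p := by rw [h, one_mul]
    _ = _ := by rw [mul_assoc, KKinv_mul, mul_one]; simp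

/-- Induction principle: a subspace containing `1` and stable by left multiplication by
the generators is everything. -/
lemma Uq_top (p : ℕ) (hp : 2 ≤ p) (S : Submodule ℂ (Uq p)) (h1 : (1 : Uq p) ∈ S)
    (hE : ∀ x ∈ S, EE p * x ∈ S) (hF : ∀ x ∈ S, FF p * x ∈ S) (hK : ∀ x ∈ S, KK p * x ∈ S)
    (u : Uq p) : u ∈ S := by
  have hKn : ∀ n : ℕ, ∀ x ∈ S, KK p ^ n * x ∈ S := by
    intro n
    induction n with
    | zero => intro x hx; simpa using hx
    | succ n ih => intro x hx; rw [pow_succ, mul_assoc]; exact ih _ (hK x hx)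
  have hKi : ∀ x ∈ S, KKinv p * x ∈ S := by
    intro x hx; rw [Kinv_eq p hp]; exact hKn _ x hx
  have key : ∀ a : FreeAlgebra ℂ gen, ∀ x ∈ S, RingQuot.mkAlgHom ℂ (rel p) a * x ∈ S := by
    intro a
    induction a using FreeAlgebra.induction with
    | grade0 r =>
      intro x hx
      rw [AlgHom.commutes, ← Algebra.smul_def]; exact S.smul_mem _ hx
    | grade1 g =>
      intro x hx
      cases g
      · exact hE x hx
      · exact hF x hx
      · exact hK x hx
      · exact hKi x hx
    | mul a b ha hb =>
      intro x hx
      rw [map_mul, mul_assoc]; exact ha _ (hb _ hx)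
    | add a b ha hb =>
      intro x hx
      rw [map_add, add_mul]; exact S.add_mem (ha _ hx) (hb _ hx)
  obtain ⟨a, rfl⟩ := RingQuot.mkAlgHom_surjective ℂ (rel p) u
  simpa using key a 1 h1

/-- The spanning set `F^m E^n K^j`. -/
lemma PBW_span (p : ℕ) (hp : 2 ≤ p) (u : Uq p) :
    u ∈ Submodule.span ℂ
      (Set.range fun x : ℕ × ℕ × ℤ => FF p ^ x.1 * EE p ^ x.2.1 * Kz p x.2.2) := by
  set S := Submodule.span ℂ
      (Set.range fun x : ℕ × ℕ × ℤ => FF p ^ x.1 * EE p ^ x.2.1 * Kz p x.2.2) with hS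
  have mem : ∀ m n j, FF p ^ m * EE p ^ n * Kz p j ∈ S := fun m n j =>
    Submodule.subset_span ⟨(m, n, j), rfl⟩
  have ext : ∀ y : Uq p, (∀ m n j, y * (FF p ^ m * EE p ^ n * Kz p j) ∈ S) →
      ∀ x ∈ S, y * x ∈ S := by
    intro y hy x hx
    induction hx using Submodule.span_induction with
    | mem x hx => obtain ⟨⟨m, n, j⟩, rfl⟩ := hx; exact hy m n j
    | zero => simp
    | add a b _ _ ha hb => rw [mul_add]; exact S.add_mem ha hb
    | smul c a _ ha => rw [mul_smul_comm]; exact S.smul_mem _ ha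
  have hK : ∀ i, ∀ x ∈ S, Kz p i * x ∈ S := by
    intro i
    refine ext _ fun m n j => ?_
    rw [← mul_assoc, ← mul_assoc, Kz_Fpow, smul_mul_assoc, mul_assoc (FF p ^ m), Kz_Epow,
      mul_smul_comm, smul_smul, smul_mul_assoc, ← mul_assoc, mul_assoc _ (Kz p i), ← Kz_add]
    exact S.smul_mem _ (mem _ _ _)
  have hF : ∀ x ∈ S, FF p * x ∈ S := by
    refine ext _ fun m n j => ?_
    rw [← mul_assoc, ← mul_assoc, ← pow_succ']; exact mem _ _ _
  refine Uq_top p hp S ?_ ?_ hF ?_ u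
  · simpa [Kz_zero] using mem 0 0 0
  · refine ext _ fun m n j => ?_
    induction m with
    | zero =>
      rw [pow_zero, one_mul, ← mul_assoc, ← pow_succ']
      simpa using mem 0 (n + 1) j
    | succ m ih =>
      have h := EF p
      rw [sub_eq_iff_eq_add] at h
      rw [pow_succ', mul_assoc, mul_assoc, ← mul_assoc (EE p), h, add_mul, smul_mul_assoc,
        sub_mul, ← Kz_one, ← Kz_neg_one, mul_assoc (FF p), ← mul_assoc (FF p ^ m)]
      refine S.add_mem (S.smul_mem _ (S.sub_mem (hK _ _ (mem _ _ _)) (hK _ _ (mem _ _ _)))) ?_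
      exact hF _ ih
  · rw [← Kz_one]; exact hK 1

/-! ### Matrix computations -/

/-- basis vector index `a_i`. -/
abbrev ia {p s : ℕ} (i : Fin s) : PIdx p s := Sum.inr (Sum.inr (Sum.inr i))
/-- basis vector index `y_k`. -/
abbrev iy {p s : ℕ} (i : Fin (p - s)) : PIdx p s := Sum.inr (Sum.inr (Sum.inl i))
/-- basis vector index `x_j`. -/
abbrev ix {p s : ℕ} (i : Fin (p - s)) : PIdx p s := Sum.inr (Sum.inl i)
/-- basis vector index `b_i`. -/
abbrev ib {p s : ℕ} (i : Fin s) : PIdx p s := Sum.inl i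

/-- `tr H`. -/
def trH {p s : ℕ} (U : Matrix (PIdx p s) (PIdx p s) ℂ) : ℂ := ∑ i : Fin s, U (ia i) (ib i)

lemma trH_F {p s : ℕ} (hs : 1 ≤ s) (hs' : s ≤ p - 1) (U : Matrix (PIdx p s) (PIdx p s) ℂ) :
    trH (U * PF p s) - trH (PF p s * U) =
      U (ia ⟨s - 1, by omega⟩) (iy ⟨0, by omega⟩) - U (ix ⟨p - s - 1, by omega⟩) (ib ⟨0, by omega⟩) := by
  have e1 : trH (U * PF p s) = (∑ i : Fin s, ∑ j : Fin s, if (j : ℕ) = i + 1 then U (ia i) (ib j) else 0)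
      + U (ia ⟨s - 1, by omega⟩) (iy ⟨0, by omega⟩) := by
    simp only [trH, Matrix.mul_apply, Fintype.sum_sum_type, PF, Matrix.of_apply, mul_ite, mul_one,
      mul_zero, Finset.sum_const_zero, add_zero, zero_add, Finset.sum_add_distrib]
    congr 1
    rw [Finset.sum_eq_single ⟨s - 1, by omega⟩, Finset.sum_eq_single ⟨0, by omega⟩]
    · rw [if_pos]; exact ⟨by simp; omega, rfl⟩
    · intro b _ hb; rw [if_neg]; rintro ⟨_, h⟩; exact hb (Fin.ext h)
    · simp
    · intro b _ hb
      refine Finset.sum_eq_zero fun c _ => ?_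
      rw [if_neg]; rintro ⟨h, _⟩; exact hb (Fin.ext (by simp; omega))
    · simp
  have e2 : trH (PF p s * U) = U (ix ⟨p - s - 1, by omega⟩) (ib ⟨0, by omega⟩) +
      (∑ i : Fin s, ∑ j : Fin s, if (i : ℕ) = j + 1 then U (ia j) (ib i) else 0) := by
    simp only [trH, Matrix.mul_apply, Fintype.sum_sum_type, PF, Matrix.of_apply, ite_mul, one_mul,
      zero_mul, Finset.sum_const_zero, add_zero, zero_add, Finset.sum_add_distrib]
    congr 1
    rw [Finset.sum_eq_single ⟨0, by omega⟩, Finset.sum_eq_single ⟨p - s - 1, by omega⟩]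
    · rw [if_pos]; exact ⟨by simp; omega, rfl⟩
    · intro b _ hb; rw [if_neg]; rintro ⟨h, _⟩; exact hb (Fin.ext (by simp; omega))
    · simp
    · intro b _ hb
      refine Finset.sum_eq_zero fun c _ => ?_
      rw [if_neg]; rintro ⟨_, h⟩; exact hb (Fin.ext h)
    · simp
  rw [e1, e2, Finset.sum_comm]; ring

lemma trH_K {p s : ℕ} (α : ℂ) (U : Matrix (PIdx p s) (PIdx p s) ℂ) :
    trH (U * PK p α s) = trH (PK p α s * U) := by
  simp only [trH, PK, Matrix.mul_diagonal, Matrix.diagonal_mul]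
  refine Finset.sum_congr rfl fun i _ => ?_
  simp only [PKdiag]; ring

/-- The intertwiner `P^{-α}(p-s) → P^α(s)`. -/
def TT (p s : ℕ) : Matrix (PIdx p s) (PIdx p (p - s)) ℂ :=
  Matrix.of fun i j =>
    match i, j with
    | .inr (.inr (.inl k)), .inl i => if (k : ℕ) = i then 1 else 0
    | .inr (.inr (.inr l)), .inr (.inl j) => if (l : ℕ) = j then 1 else 0
    | _, _ => 0

lemma TT_mul_ib {p s : ℕ} (U : Matrix (PIdx p s) (PIdx p s) ℂ) (z : PIdx p s) (i : Fin (p - s)) :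
    (U * TT p s) z (ib i) = U z (iy i) := by
  simp only [Matrix.mul_apply, Fintype.sum_sum_type, TT, Matrix.of_apply, mul_ite, mul_one,
    mul_zero, Finset.sum_const_zero, add_zero, zero_add]
  rw [Finset.sum_eq_single i]
  · simp
  · intro b _ hb; rw [if_neg]; exact fun h => hb (Fin.ext h)
  · simp

lemma TT_mul_ix {p s : ℕ} (hs : s ≤ p) (U : Matrix (PIdx p s) (PIdx p s) ℂ) (z : PIdx p s)
    (i : Fin (p - (p - s))) :
    (U * TT p s) z (ix i) = U z (ia ⟨i, by omega⟩) := by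
  simp only [Matrix.mul_apply, Fintype.sum_sum_type, TT, Matrix.of_apply, mul_ite, mul_one,
    mul_zero, Finset.sum_const_zero, add_zero, zero_add]
  rw [Finset.sum_eq_single ⟨i, by omega⟩]
  · simp
  · intro b _ hb; rw [if_neg]; exact fun h => hb (Fin.ext h)
  · simp

lemma TT_mul_iy {p s : ℕ} (U : Matrix (PIdx p s) (PIdx p s) ℂ) (z : PIdx p s)
    (i : Fin (p - (p - s))) : (U * TT p s) z (iy i) = 0 := by
  simp [Matrix.mul_apply, TT]

lemma TT_mul_ia {p s : ℕ} (U : Matrix (PIdx p s) (PIdx p s) ℂ) (z : PIdx p s)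
    (i : Fin (p - s)) : (U * TT p s) z (ia i) = 0 := by
  simp [Matrix.mul_apply, TT]

lemma mul_TT_ib {p s : ℕ} (U : Matrix (PIdx p (p - s)) (PIdx p (p - s)) ℂ) (z : PIdx p (p - s))
    (i : Fin s) : (TT p s * U) (ib i) z = 0 := by
  simp [Matrix.mul_apply, TT]

lemma mul_TT_ix {p s : ℕ} (U : Matrix (PIdx p (p - s)) (PIdx p (p - s)) ℂ) (z : PIdx p (p - s))
    (i : Fin (p - s)) : (TT p s * U) (ix i) z = 0 := by
  simp [Matrix.mul_apply, TT]

lemma mul_TT_iy {p s : ℕ} (U : Matrix (PIdx p (p - s)) (PIdx p (p - s)) ℂ) (z : PIdx p (p - s))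
    (i : Fin (p - s)) : (TT p s * U) (iy i) z = U (ib i) z := by
  simp only [Matrix.mul_apply, Fintype.sum_sum_type, TT, Matrix.of_apply, ite_mul, one_mul,
    zero_mul, Finset.sum_const_zero, add_zero, zero_add]
  rw [Finset.sum_eq_single i]
  · simp
  · intro b _ hb; rw [if_neg]; exact fun h => hb (Fin.ext h.symm)
  · simp

lemma mul_TT_ia {p s : ℕ} (hs : s ≤ p) (U : Matrix (PIdx p (p - s)) (PIdx p (p - s)) ℂ)
    (z : PIdx p (p - s)) (i : Fin s) :
    (TT p s * U) (ia i) z = U (ix ⟨i, by omega⟩) z := by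
  simp only [Matrix.mul_apply, Fintype.sum_sum_type, TT, Matrix.of_apply, ite_mul, one_mul,
    zero_mul, Finset.sum_const_zero, add_zero, zero_add]
  rw [Finset.sum_eq_single ⟨i, by omega⟩]
  · simp
  · intro b _ hb; rw [if_neg]; exact fun h => hb (Fin.ext h.symm)
  · simp

lemma TT_F {p s : ℕ} (hs : s ≤ p) : PF p s * TT p s = TT p s * PF p (p - s) := by
  ext a b
  rcases a with a | a | a | a <;> rcases b with b | b | b | b <;>
    simp only [TT_mul_ib, TT_mul_ix hs, TT_mul_iy, TT_mul_ia, mul_TT_ib, mul_TT_ix, mul_TT_iy,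
      mul_TT_ia hs] <;> simp [PF]

lemma TT_E {p s : ℕ} (hs : s ≤ p) (α : ℂ) :
    PE p α s * TT p s = TT p s * PE p (-α) (p - s) := by
  ext a b
  rcases a with a | a | a | a <;> rcases b with b | b | b | b <;>
    simp only [TT_mul_ib, TT_mul_ix hs, TT_mul_iy, TT_mul_ia, mul_TT_ib, mul_TT_ix, mul_TT_iy,
      mul_TT_ia hs] <;> simp [PE, Nat.cast_sub hs, Nat.sub_sub_self hs]

lemma TT_K {p s : ℕ} (hs : s ≤ p) (α : ℂ) :
    PK p α s * TT p s = TT p s * PK p (-α) (p - s) := by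
  ext a b
  rcases a with a | a | a | a <;> rcases b with b | b | b | b <;>
    simp only [TT_mul_ib, TT_mul_ix hs, TT_mul_iy, TT_mul_ia, mul_TT_ib, mul_TT_ix, mul_TT_iy,
      mul_TT_ia hs] <;> simp [PK, PKdiag, Matrix.diagonal_apply, Nat.cast_sub hs, Fin.ext_iff]

section rep

/-- `ρ` is the representation `P^α(s)`. -/
def IsP (p : ℕ) (α : ℂ) (s : ℕ) (ρ : Uq p →ₐ[ℂ] Matrix (PIdx p s) (PIdx p s) ℂ) : Prop :=
  ρ (KK p) = PK p α s ∧ ρ (EE p) = PE p α s ∧ ρ (FF p) = PF p s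

lemma intertwine {p s : ℕ} (hp : 2 ≤ p) (hs : s ≤ p) {α : ℂ}
    {ρ : Uq p →ₐ[ℂ] Matrix (PIdx p s) (PIdx p s) ℂ}
    {ρ' : Uq p →ₐ[ℂ] Matrix (PIdx p (p - s)) (PIdx p (p - s)) ℂ}
    (h : IsP p α s ρ) (h' : IsP p (-α) (p - s) ρ') (u : Uq p) :
    ρ u * TT p s = TT p s * ρ' u := by
  let S : Submodule ℂ (Uq p) :=
    { carrier := {u | ρ u * TT p s = TT p s * ρ' u}
      add_mem' := by
        intro a b ha hb
        simp only [Set.mem_ofPred_eq] at *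
        rw [map_add, map_add, Matrix.add_mul, Matrix.mul_add, ha, hb]
      zero_mem' := by simp
      smul_mem' := by
        intro c a ha
        simp only [Set.mem_ofPred_eq] at *
        rw [map_smul, map_smul, Matrix.smul_mul, Matrix.mul_smul, ha] }
  have gen : ∀ y, ρ y * TT p s = TT p s * ρ' y → ∀ x ∈ S, y * x ∈ S := by
    intro y hy x hx
    change ρ (y * x) * TT p s = TT p s * ρ' (y * x)
    change ρ x * TT p s = TT p s * ρ' x at hx
    rw [map_mul, map_mul, Matrix.mul_assoc, hx, ← Matrix.mul_assoc, hy, Matrix.mul_assoc]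
  refine Uq_top p hp S ?_ (gen _ ?_) (gen _ ?_) (gen _ ?_) u
  · change ρ 1 * TT p s = TT p s * ρ' 1
    simp
  · rw [h.2.1, h'.2.1, TT_E hs]
  · rw [h.2.2, h'.2.2, TT_F hs]
  · rw [h.1, h'.1, TT_K hs]

lemma entry_eq {p s : ℕ} (hp : 2 ≤ p) (hs : 1 ≤ s) (hs' : s ≤ p - 1) {α : ℂ}
    {ρ : Uq p →ₐ[ℂ] Matrix (PIdx p s) (PIdx p s) ℂ}
    {ρ' : Uq p →ₐ[ℂ] Matrix (PIdx p (p - s)) (PIdx p (p - s)) ℂ}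
    (h : IsP p α s ρ) (h' : IsP p (-α) (p - s) ρ') (u : Uq p) :
    ρ u (ia ⟨s - 1, by omega⟩) (iy ⟨0, by omega⟩) =
      ρ' u (ix ⟨p - (p - s) - 1, by omega⟩) (ib ⟨0, by omega⟩) := by
  have := congrFun (congrFun (intertwine hp (by omega) h h' u) (ia ⟨s - 1, by omega⟩))
    (ib ⟨0, by omega⟩)
  rw [TT_mul_ib, mul_TT_ia (by omega)] at this
  rw [this]
  exact congrArg (fun t => ρ' u (ix t) (ib ⟨0, by omega⟩)) (Fin.ext (by simp; omega))

end rep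

section casimir

/-- standard basis vector. -/
abbrev ev {p s : ℕ} (z : PIdx p s) : PIdx p s → ℂ := Pi.single z 1

lemma F_b {p s : ℕ} (i : Fin s) (j : Fin s) (h : (j : ℕ) = i + 1) :
    (PF p s).mulVec (ev (ib i)) = ev (ib j) := by
  rw [Matrix.mulVec_single_one]
  ext z
  rcases z with z | z | z | z <;> simp [PF, Pi.single_apply, Fin.ext_iff, h]
  omega

lemma F_a {p s : ℕ} (i : Fin s) (j : Fin s) (h : (j : ℕ) = i + 1) :
    (PF p s).mulVec (ev (ia i)) = ev (ia j) := by
  rw [Matrix.mulVec_single_one]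
  ext z
  rcases z with z | z | z | z <;> simp [PF, Pi.single_apply, Fin.ext_iff, h]

lemma F_x {p s : ℕ} (i : Fin (p - s)) (j : Fin s) (h : (i : ℕ) + 1 = p - s) (hj : (j : ℕ) = 0) :
    (PF p s).mulVec (ev (ix i)) = ev (ia j) := by
  rw [Matrix.mulVec_single_one]
  ext z
  rcases z with z | z | z | z <;> simp [PF, Pi.single_apply, Fin.ext_iff, h, hj]
  omega

lemma E_b {p s : ℕ} (α : ℂ) (i : Fin s) (j : Fin s) (h : (j : ℕ) = i + 1) :
    (PE p α s).mulVec (ev (ib j)) =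
      (α * qi p (j : ℕ) * qi p ((s : ℤ) - (j : ℕ))) • ev (ib i) + ev (ia i) := by
  rw [Matrix.mulVec_single_one]
  ext z
  rcases z with z | z | z | z <;> simp [PE, Pi.single_apply, Fin.ext_iff, h]

lemma E_b0 {p s : ℕ} (α : ℂ) (i : Fin (p - s)) (j : Fin s) (h : (i : ℕ) + 1 = p - s)
    (hj : (j : ℕ) = 0) :
    (PE p α s).mulVec (ev (ib j)) = ev (ix i) := by
  rw [Matrix.mulVec_single_one]
  ext z
  rcases z with z | z | z | z <;> simp [PE, Pi.single_apply, Fin.ext_iff, hj]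
  grind

lemma E_a {p s : ℕ} (α : ℂ) (i : Fin s) (j : Fin s) (h : (j : ℕ) = i + 1) :
    (PE p α s).mulVec (ev (ia j)) =
      (α * qi p (j : ℕ) * qi p ((s : ℤ) - (j : ℕ))) • ev (ia i) := by
  rw [Matrix.mulVec_single_one]
  ext z
  rcases z with z | z | z | z <;> simp [PE, Pi.single_apply, Fin.ext_iff, h]

lemma E_a0 {p s : ℕ} (α : ℂ) (j : Fin s) (hj : (j : ℕ) = 0) :
    (PE p α s).mulVec (ev (ia j)) = 0 := by
  rw [Matrix.mulVec_single_one]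
  ext z
  rcases z with z | z | z | z <;> simp [PE, hj]

/-- weight of `b_i` and `a_i`. -/
def wt (p : ℕ) (α : ℂ) (s : ℕ) (i : ℕ) : ℂ := α * q p ^ ((s : ℤ) - 1 - 2 * (i : ℕ))

lemma K_b {p s : ℕ} (α : ℂ) (i : Fin s) :
    (PK p α s).mulVec (ev (ib i)) = wt p α s i • ev (ib i) := by
  rw [Matrix.mulVec_single_one]
  ext z
  rcases z with z | z | z | z <;>
    simp [PK, PKdiag, wt, Pi.single_apply, Matrix.diagonal_apply]
  split_ifs with h
  · rw [h]
  · rfl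

lemma K_a {p s : ℕ} (α : ℂ) (i : Fin s) :
    (PK p α s).mulVec (ev (ia i)) = wt p α s i • ev (ia i) := by
  rw [Matrix.mulVec_single_one]
  ext z
  rcases z with z | z | z | z <;>
    simp [PK, PKdiag, wt, Pi.single_apply, Matrix.diagonal_apply]
  split_ifs with h
  · rw [h]
  · rfl

lemma FE_b {p s : ℕ} (hs' : s ≤ p - 1) (hp : 2 ≤ p) (α : ℂ) (i : Fin s) :
    (PF p s).mulVec ((PE p α s).mulVec (ev (ib i))) =
      (α * qi p (i : ℕ) * qi p ((s : ℤ) - (i : ℕ))) • ev (ib i) + ev (ia i) := by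
  by_cases hi : (i : ℕ) = 0
  · rw [E_b0 α ⟨p - s - 1, by omega⟩ i (by simp; omega) hi, F_x _ i (by simp; omega) hi]
    simp [hi, qi]
  · rw [E_b α ⟨i - 1, by omega⟩ i (by simp; omega), Matrix.mulVec_add, Matrix.mulVec_smul,
      F_b _ i (by simp; omega), F_a _ i (by simp; omega)]

lemma FE_a {p s : ℕ} (α : ℂ) (i : Fin s) :
    (PF p s).mulVec ((PE p α s).mulVec (ev (ia i))) =
      (α * qi p (i : ℕ) * qi p ((s : ℤ) - (i : ℕ))) • ev (ia i) := by
  by_cases hi : (i : ℕ) = 0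
  · rw [E_a0 α i hi]
    simp [hi, qi]
  · rw [E_a α ⟨i - 1, by omega⟩ i (by simp; omega), Matrix.mulVec_smul,
      F_a _ i (by simp; omega)]

lemma wt_ne {p : ℕ} {α : ℂ} (hα : α = 1 ∨ α = -1) (s i : ℕ) : wt p α s i ≠ 0 := by
  refine mul_ne_zero ?_ (zpow_ne_zero _ (q_ne p))
  rcases hα with rfl | rfl <;> norm_num

lemma zact {p s : ℕ} {α : ℂ} {ρ : Uq p →ₐ[ℂ] Matrix (PIdx p s) (PIdx p s) ℂ}
    (v : PIdx p s → ℂ) (w : ℂ) (hw : w ≠ 0)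
    (h : (ρ (KK p)).mulVec v = w • v) (j : ℤ) : (ρ (Kz p j)).mulVec v = w ^ j • v := by
  have h' : (ρ (KKinv p)).mulVec v = w⁻¹ • v := by
    have : (ρ (KKinv p)).mulVec ((ρ (KK p)).mulVec v) = v := by
      rw [Matrix.mulVec_mulVec, ← map_mul, Kinv_mul, map_one, Matrix.one_mulVec]
    rw [h, Matrix.mulVec_smul] at this
    nth_rewrite 2 [← this]
    rw [smul_smul, inv_mul_cancel₀ hw, one_smul]
  induction j with
  | zero => simp [Kz_zero]
  | succ i ih =>
    rw [Kz_add, Kz_one, map_mul, ← Matrix.mulVec_mulVec, h, Matrix.mulVec_smul, ih, smul_smul,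
      zpow_add_one₀ hw, mul_comm]
  | pred i ih =>
    rw [sub_eq_add_neg, Kz_add, Kz_neg_one, map_mul, ← Matrix.mulVec_mulVec, h',
      Matrix.mulVec_smul, ih, smul_smul, ← sub_eq_add_neg, zpow_sub_one₀ hw, mul_comm]

/-- Casimir eigenvalue. -/
def cc (p : ℕ) (α : ℂ) (s : ℕ) : ℂ := α * (q p ^ (s : ℤ) + (q p ^ (s : ℤ))⁻¹)

lemma cas_scalar {p : ℕ} (hp : 2 ≤ p) {α : ℂ} (hα : α = 1 ∨ α = -1) (s i : ℕ) :
    hh p * (α * qi p (i : ℕ) * qi p ((s : ℤ) - (i : ℕ))) + q p * wt p α s i +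
      (q p)⁻¹ * (wt p α s i)⁻¹ = cc p α s := by
  have h0 := q_sub_inv p hp
  have h1 := q_ne p
  have hα2 : α⁻¹ = α := by rcases hα with rfl | rfl <;> norm_num
  have e : hh p * (α * qi p (i : ℕ) * qi p ((s : ℤ) - (i : ℕ))) =
      α * (q p ^ (i : ℤ) - q p ^ (-(i : ℤ))) * (q p ^ ((s : ℤ) - i) - q p ^ (-((s : ℤ) - i))) := by
    unfold hh qi
    generalize q p - (q p)⁻¹ = z at *
    field_simp
  rw [e, wt, mul_inv, hα2, cc]
  have : q p ^ ((s : ℤ) - 1 - 2 * (i : ℕ)) =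
      q p ^ (s : ℤ) * (q p)⁻¹ * (q p ^ (i : ℤ))⁻¹ * (q p ^ (i : ℤ))⁻¹ := by
    rw [← zpow_neg, ← zpow_neg_one, ← zpow_add₀ h1, ← zpow_add₀ h1, ← zpow_add₀ h1]
    congr 1; ring
  rw [this, neg_sub, zpow_sub₀ h1, zpow_sub₀ h1, zpow_neg]
  have hi : q p ^ (i : ℤ) ≠ 0 := zpow_ne_zero _ h1
  have hs : q p ^ (s : ℤ) ≠ 0 := zpow_ne_zero _ h1
  generalize q p ^ (i : ℤ) = x at *
  generalize q p ^ (s : ℤ) = y at *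
  field_simp
  ring

lemma C_b {p s : ℕ} (hp : 2 ≤ p) (hs' : s ≤ p - 1) {α : ℂ} (hα : α = 1 ∨ α = -1)
    {ρ : Uq p →ₐ[ℂ] Matrix (PIdx p s) (PIdx p s) ℂ} (h : IsP p α s ρ) (i : Fin s) :
    (ρ (Cas p)).mulVec (ev (ib i)) = cc p α s • ev (ib i) + hh p • ev (ia i) := by
  have hK : (ρ (KK p)).mulVec (ev (ib i)) = wt p α s i • ev (ib i) := by rw [h.1, K_b]
  have hKi := zact (α := α) _ _ (wt_ne hα s i) hK (-1)
  rw [Kz_neg_one] at hKi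
  rw [Cas, map_add, map_add, map_smul, map_smul, map_smul, map_mul, Matrix.add_mulVec,
    Matrix.add_mulVec, Matrix.smul_mulVec, Matrix.smul_mulVec, Matrix.smul_mulVec, hK, hKi,
    ← Matrix.mulVec_mulVec, h.2.1, h.2.2, FE_b hs' hp, ← cas_scalar hp hα s i, zpow_neg_one]
  module

lemma C_a {p s : ℕ} (hp : 2 ≤ p) {α : ℂ} (hα : α = 1 ∨ α = -1)
    {ρ : Uq p →ₐ[ℂ] Matrix (PIdx p s) (PIdx p s) ℂ} (h : IsP p α s ρ) (i : Fin s) :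
    (ρ (Cas p)).mulVec (ev (ia i)) = cc p α s • ev (ia i) := by
  have hK : (ρ (KK p)).mulVec (ev (ia i)) = wt p α s i • ev (ia i) := by rw [h.1, K_a]
  have hKi := zact (α := α) _ _ (wt_ne hα s i) hK (-1)
  rw [Kz_neg_one] at hKi
  rw [Cas, map_add, map_add, map_smul, map_smul, map_smul, map_mul, Matrix.add_mulVec,
    Matrix.add_mulVec, Matrix.smul_mulVec, Matrix.smul_mulVec, Matrix.smul_mulVec, hK, hKi,
    ← Matrix.mulVec_mulVec, h.2.1, h.2.2, FE_a, ← cas_scalar hp hα s i, zpow_neg_one]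
  module

lemma Cn_b {p s : ℕ} (hp : 2 ≤ p) (hs' : s ≤ p - 1) {α : ℂ} (hα : α = 1 ∨ α = -1)
    {ρ : Uq p →ₐ[ℂ] Matrix (PIdx p s) (PIdx p s) ℂ} (h : IsP p α s ρ) (i : Fin s) (n : ℕ) :
    (ρ (Cas p ^ n)).mulVec (ev (ib i)) =
      cc p α s ^ n • ev (ib i) + (n * cc p α s ^ (n - 1) * hh p) • ev (ia i) := by
  induction n with
  | zero => rw [pow_zero, map_one, Matrix.one_mulVec]; simp
  | succ n ih =>
    rw [pow_succ', map_mul, ← Matrix.mulVec_mulVec, ih, Matrix.mulVec_add, Matrix.mulVec_smul,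
      Matrix.mulVec_smul, C_b hp hs' hα h, C_a hp hα h, smul_add, smul_smul, smul_smul, smul_smul,
      add_assoc, ← add_smul]
    congr 2
    rcases n with _ | n
    · simp
    · simp only [Nat.add_sub_cancel]
      push_cast
      ring

lemma trH_CK {p s : ℕ} (hp : 2 ≤ p) (hs' : s ≤ p - 1) {α : ℂ} (hα : α = 1 ∨ α = -1)
    {ρ : Uq p →ₐ[ℂ] Matrix (PIdx p s) (PIdx p s) ℂ} (h : IsP p α s ρ) (n : ℕ) (j : ℤ) :
    trH (ρ (Cas p ^ n * Kz p j)) =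
      (n * cc p α s ^ (n - 1) * hh p) * ∑ i ∈ Finset.range s, wt p α s i ^ j := by
  rw [← Fin.sum_univ_eq_sum_range (fun i => wt p α s i ^ j), Finset.mul_sum, trH]
  refine Finset.sum_congr rfl fun i _ => ?_
  have hK : (ρ (KK p)).mulVec (ev (ib i)) = wt p α s i • ev (ib i) := by rw [h.1, K_b]
  have hKi := zact (α := α) _ _ (wt_ne hα s i) hK j
  have key : (ρ (Cas p ^ n * Kz p j)).mulVec (ev (ib i)) = wt p α s i ^ j •
      (cc p α s ^ n • ev (ib i) + (n * cc p α s ^ (n - 1) * hh p) • ev (ia i)) := by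
    rw [map_mul, ← Matrix.mulVec_mulVec, hKi, Matrix.mulVec_smul, Cn_b hp hs' hα h]
  rw [Matrix.mulVec_single_one] at key
  have := congrFun key (ia i)
  simp only [Matrix.col_apply, Pi.smul_apply, Pi.add_apply, smul_eq_mul] at this
  rw [this]
  simp
  ring

end casimir

section G

variable {p : ℕ} {ρP : (α : ℂ) → (s : ℕ) → (Uq p →ₐ[ℂ] Matrix (PIdx p s) (PIdx p s) ℂ)}

lemma GOf_eq (s : ℕ) (u : Uq p) :
    GOf p ρP s u = trH (ρP 1 s u) + trH (ρP (-1) (p - s) u) := by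
  simp [GOf, trH]
  rfl

lemma xb_congr {α α' : ℂ} {s s' : ℕ} (hα : α = α') (h : s = s') (u : Uq p) (h1 : p - s - 1 < p - s)
    (h2 : 0 < s) (h1' : p - s' - 1 < p - s') (h2' : 0 < s') :
    ρP α s u (ix ⟨p - s - 1, h1⟩) (ib ⟨0, h2⟩) = ρP α' s' u (ix ⟨p - s' - 1, h1'⟩) (ib ⟨0, h2'⟩) := by
  subst hα h; rfl

lemma IsP_congr {α α' : ℂ} {s s' : ℕ} (hα : α = α') (h : s = s') (H : IsP p α s (ρP α s)) :
    IsP p α' s' (ρP α' s') := by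
  subst hα h; exact H

lemma G_F (hp : 2 ≤ p) (hP : IsPRep p ρP) (s : ℕ) (hs : 1 ≤ s) (hs' : s ≤ p - 1) (u : Uq p) :
    GOf p ρP s (u * FF p) = GOf p ρP s (FF p * u) := by
  have P1 : IsP p 1 s (ρP 1 s) := hP 1 (Or.inl rfl) s hs hs'
  have P2 : IsP p (-1) (p - s) (ρP (-1) (p - s)) := hP (-1) (Or.inr rfl) (p - s) (by omega) (by omega)
  have e : s = p - (p - s) := by omega
  have P3 : IsP p (-(-1)) (p - (p - s)) (ρP (-(-1)) (p - (p - s))) :=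
    IsP_congr (by norm_num) e P1
  have a1 := entry_eq hp hs hs' P1 P2 u
  have a2 := entry_eq hp (by omega) (by omega) P2 P3 u
  have a3 := xb_congr (ρP := ρP) (show (-(-1) : ℂ) = 1 by norm_num) e.symm u (by omega) (by omega)
    (by omega) (by omega)
  rw [a3] at a2
  have t1 := trH_F hs hs' (ρP 1 s u)
  have t2 := trH_F (s := p - s) (by omega) (by omega) (ρP (-1) (p - s) u)
  rw [GOf_eq, GOf_eq, map_mul, map_mul, map_mul, map_mul, P1.2.2, P2.2.2]
  linear_combination t1 + t2 + a1 + a2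

lemma G_K (hp : 2 ≤ p) (hP : IsPRep p ρP) (s : ℕ) (hs : 1 ≤ s) (hs' : s ≤ p - 1) (u : Uq p) :
    GOf p ρP s (u * KK p) = GOf p ρP s (KK p * u) := by
  have P1 : IsP p 1 s (ρP 1 s) := hP 1 (Or.inl rfl) s hs hs'
  have P2 : IsP p (-1) (p - s) (ρP (-1) (p - s)) := hP (-1) (Or.inr rfl) (p - s) (by omega) (by omega)
  rw [GOf_eq, GOf_eq, map_mul, map_mul, map_mul, map_mul, P1.1, P2.1, trH_K, trH_K]

lemma G_CK (hp : 2 ≤ p) (hP : IsPRep p ρP) (s : ℕ) (hs : 1 ≤ s) (hs' : s ≤ p - 1) (n : ℕ) (j : ℤ)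
    (h : n = 0 ∨ ¬ (p : ℤ) ∣ j) : GOf p ρP s (Cas p ^ n * Kz p j) = 0 := by
  have P1 : IsP p 1 s (ρP 1 s) := hP 1 (Or.inl rfl) s hs hs'
  have P2 : IsP p (-1) (p - s) (ρP (-1) (p - s)) := hP (-1) (Or.inr rfl) (p - s) (by omega) (by omega)
  rw [GOf_eq, trH_CK hp hs' (Or.inl rfl) P1, trH_CK hp (by omega) (Or.inr rfl) P2]
  rcases h with rfl | h
  · simp
  have h0 := q_ne p
  have hqp := q_pow_p p hp
  have ec : cc p (-1) (p - s) = cc p 1 s := by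
    have : (s : ℤ) ≤ p := by omega
    rw [cc, cc, Nat.cast_sub (by omega), zpow_sub₀ h0, hqp]
    have : q p ^ (s : ℤ) ≠ 0 := zpow_ne_zero _ h0
    field_simp
    ring
  have ew : ∀ i, wt p (-1) (p - s) i = wt p 1 s (s + i) := by
    intro i
    rw [wt, wt, Nat.cast_sub (by omega),
      show (p : ℤ) - s - 1 - 2 * (i : ℕ) = p + (s - 1 - 2 * ((s + i : ℕ) : ℤ)) by push_cast; ring,
      zpow_add₀ h0, hqp]
    ring
  rw [ec, ← mul_add]
  simp only [ew]
  rw [← Finset.sum_range_add (fun i => wt p 1 s i ^ j), show s + (p - s) = p by omega]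
  convert mul_zero _
  set ω : ℂ := q p ^ (2 * -j) with hω
  have hω1 : ω ≠ 1 := by
    rw [hω, Ne, q_two_zpow p hp]; simpa using h
  have hωp : ω ^ p = 1 := by
    rw [hω, ← zpow_natCast, ← zpow_mul, mul_assoc, q_two_zpow p hp]
    exact dvd_mul_left _ _
  have hw : ∀ i : ℕ, wt p 1 s i ^ j = q p ^ (((s : ℤ) - 1) * j) * ω ^ i := by
    intro i
    rw [wt, one_mul, hω, ← zpow_natCast, ← zpow_mul, ← zpow_mul, ← zpow_add₀ h0]
    congr 1; ring
  simp only [hw]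
  rw [← Finset.mul_sum, geom_sum_eq hω1, hωp]
  simp

end G

section final

/-- Lower order terms in the expansion of `F^k E^k`. -/
def WW (p k : ℕ) : Submodule ℂ (Uq p) :=
  Submodule.span ℂ {x | ∃ (i : ℕ) (d : ℤ), i < k ∧ (i : ℤ) + |d| ≤ k ∧ x = Cas p ^ i * Kz p d}

lemma FkEk (p : ℕ) (hp : 2 ≤ p) (k : ℕ) :
    hh p ^ k • (FF p ^ k * EE p ^ k) - Cas p ^ k ∈ WW p k := by
  induction k with
  | zero => simp
  | succ k ih =>
    have mem : ∀ (i : ℕ) (d : ℤ), i < k + 1 → (i : ℤ) + |d| ≤ (k + 1 : ℕ) →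
        Cas p ^ i * Kz p d ∈ WW p (k + 1) := fun i d h1 h2 =>
      Submodule.subset_span ⟨i, d, h1, h2, rfl⟩
    have cEk : Cas p * EE p ^ k = EE p ^ k * Cas p :=
      (Commute.pow_right (show Commute (Cas p) (EE p) from Cas_E p hp) k).eq
    have e : hh p ^ (k + 1) • (FF p ^ (k + 1) * EE p ^ (k + 1)) =
        (hh p ^ k • (FF p ^ k * EE p ^ k)) * (Cas p - (q p * q p ^ (2 * 1 * k : ℤ)) • Kz p 1 -
          ((q p)⁻¹ * q p ^ (2 * (-1) * k : ℤ)) • Kz p (-1)) := by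
      have : hh p ^ (k + 1) • (FF p ^ (k + 1) * EE p ^ (k + 1)) =
          hh p ^ k • (FF p ^ k * ((hh p • (FF p * EE p)) * EE p ^ k)) := by
        rw [pow_succ, pow_succ (FF p), pow_succ' (EE p)]
        simp only [smul_mul_assoc, mul_smul_comm, smul_smul, mul_assoc]
      rw [this, hFE, sub_mul, sub_mul, cEk, smul_mul_assoc, smul_mul_assoc, Kz_Epow, Kz_Epow]
      simp only [mul_sub, smul_mul_assoc, mul_smul_comm, smul_smul, mul_assoc]
      module
    rw [e]
    generalize q p * q p ^ (2 * 1 * k : ℤ) = c1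
    generalize (q p)⁻¹ * q p ^ (2 * (-1) * k : ℤ) = c2
    set X := hh p ^ k • (FF p ^ k * EE p ^ k)
    have e2 : X * (Cas p - c1 • Kz p 1 - c2 • Kz p (-1)) - Cas p ^ (k + 1) =
        (X - Cas p ^ k) * Cas p - c1 • ((X - Cas p ^ k) * Kz p 1)
        - c2 • ((X - Cas p ^ k) * Kz p (-1)) - c1 • (Cas p ^ k * Kz p 1)
        - c2 • (Cas p ^ k * Kz p (-1)) := by
      rw [pow_succ]
      simp only [mul_sub, sub_mul, mul_smul_comm, smul_sub]
      abel
    rw [e2]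
    have r1 : ∀ w ∈ WW p k, w * Cas p ∈ WW p (k + 1) := by
      intro w hw
      induction hw using Submodule.span_induction with
      | mem x hx =>
        obtain ⟨i, d, h1, h2, rfl⟩ := hx
        rw [mul_assoc, Cas_Kz, ← mul_assoc, ← pow_succ]
        exact mem _ _ (by omega) (by push_cast; linarith)
      | zero => simp
      | add a b _ _ ha hb => rw [add_mul]; exact Submodule.add_mem _ ha hb
      | smul c a _ ha => rw [smul_mul_assoc]; exact Submodule.smul_mem _ _ ha
    have r2 : ∀ j : ℤ, |j| ≤ 1 → ∀ w ∈ WW p k, w * Kz p j ∈ WW p (k + 1) := by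
      intro j hj w hw
      induction hw using Submodule.span_induction with
      | mem x hx =>
        obtain ⟨i, d, h1, h2, rfl⟩ := hx
        rw [mul_assoc, ← Kz_add]
        refine mem _ _ (by omega) ?_
        have := abs_add_le d j
        push_cast; linarith
      | zero => simp
      | add a b _ _ ha hb => rw [add_mul]; exact Submodule.add_mem _ ha hb
      | smul c a _ ha => rw [smul_mul_assoc]; exact Submodule.smul_mem _ _ ha
    refine Submodule.sub_mem _ (Submodule.sub_mem _ (Submodule.sub_mem _ (Submodule.sub_mem _
      (r1 _ ih) ?_) ?_) ?_) ?_ <;> refine Submodule.smul_mem _ _ ?_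
    · exact r2 _ (by simp) _ ih
    · exact r2 _ (by simp) _ ih
    · exact mem _ _ (by omega) (by simp)
    · exact mem _ _ (by omega) (by simp)

lemma weight_zero (p : ℕ) (φ : Uq p →ₗ[ℂ] ℂ) (hK : ∀ u, φ (u * KK p) = φ (KK p * u))
    (x : Uq p) (c : ℂ) (hc : c ≠ 1) (h : KK p * x = c • (x * KK p)) : φ x = 0 := by
  have h1 := hK (x * KKinv p)
  rw [mul_assoc, Kinv_mul, mul_one, ← mul_assoc, h, smul_mul_assoc, mul_assoc, KKinv_mul, mul_one,
    map_smul, smul_eq_mul] at h1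
  have : (1 - c) * φ x = 0 := by linear_combination h1
  exact (mul_eq_zero.mp this).resolve_left (sub_ne_zero.mpr hc.symm)

lemma weight_zero_FE (p : ℕ) (hp : 2 ≤ p) (φ : Uq p →ₗ[ℂ] ℂ)
    (hK : ∀ u, φ (u * KK p) = φ (KK p * u)) (m n : ℕ) (j : ℤ) (h : ¬ (p : ℤ) ∣ (n : ℤ) - m) :
    φ (FF p ^ m * EE p ^ n * Kz p j) = 0 := by
  refine weight_zero p φ hK _ (q p ^ (2 * ((n : ℤ) - m))) (by rwa [Ne, q_two_zpow p hp]) ?_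
  rw [← Kz_one, ← mul_assoc, ← mul_assoc, Kz_Fpow, smul_mul_assoc, mul_assoc (FF p ^ m), Kz_Epow,
      mul_smul_comm, smul_smul, smul_mul_assoc, ← mul_assoc, mul_assoc _ (Kz p 1), Kz_comm,
      mul_assoc _ (Kz p j), ← zpow_add₀ (q_ne p)]
  congr 2; ring

lemma slf_rec (p : ℕ) (hp : 2 ≤ p) (φ : Uq p →ₗ[ℂ] ℂ) (hF : ∀ u, φ (u * FF p) = φ (FF p * u))
    (n : ℕ) (j : ℤ) :
    (q p ^ j - q p ^ (-j)) * φ (Cas p ^ (n + 1) * Kz p j) =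
      (q p ^ (j + 1) - q p ^ (-(j + 1))) * φ (Cas p ^ n * Kz p (j + 1)) +
      (q p ^ (j - 1) - q p ^ (-(j - 1))) * φ (Cas p ^ n * Kz p (j - 1)) := by
  have h := hF (Cas p ^ n * EE p * Kz p j)
  have cF : FF p * Cas p ^ n = Cas p ^ n * FF p :=
    (Commute.pow_right (show Commute (FF p) (Cas p) from (Cas_F p hp).symm) n).eq
  have e1 : hh p • (FF p * (Cas p ^ n * EE p * Kz p j)) = Cas p ^ (n + 1) * Kz p j
      - q p • (Cas p ^ n * Kz p (j + 1)) - (q p)⁻¹ • (Cas p ^ n * Kz p (j - 1)) := by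
    rw [← mul_assoc, ← mul_assoc, cF, mul_assoc (Cas p ^ n), ← smul_mul_assoc, ← mul_smul_comm,
      hFE, pow_succ, add_comm j 1, sub_eq_neg_add j 1, Kz_add, Kz_add]
    simp only [mul_sub, sub_mul, mul_smul_comm, smul_mul_assoc, mul_assoc]
  have e2 : hh p • (Cas p ^ n * EE p * Kz p j * FF p) = q p ^ (-2 * j) • (Cas p ^ (n + 1) * Kz p j
      - (q p)⁻¹ • (Cas p ^ n * Kz p (j + 1)) - q p • (Cas p ^ n * Kz p (j - 1))) := by
    rw [mul_assoc _ (Kz p j), Kz_F, mul_smul_comm, smul_comm]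
    congr 1
    rw [← mul_assoc, mul_assoc (Cas p ^ n), ← smul_mul_assoc, ← mul_smul_comm,
      hEF p hp, pow_succ, add_comm j 1, sub_eq_neg_add j 1, Kz_add, Kz_add]
    simp only [mul_sub, sub_mul, mul_smul_comm, smul_mul_assoc, mul_assoc]
  have h' : φ (hh p • (Cas p ^ n * EE p * Kz p j * FF p)) =
      φ (hh p • (FF p * (Cas p ^ n * EE p * Kz p j))) := by rw [map_smul, map_smul, h]
  rw [e1, e2] at h'
  simp only [map_smul, map_sub, smul_eq_mul] at h'
  have h0 := q_ne p
  have z1 : q p ^ (-2 * j) = (q p ^ j)⁻¹ * (q p ^ j)⁻¹ := by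
    rw [← zpow_neg, ← zpow_add₀ h0]; congr 1; ring
  rw [z1] at h'
  rw [zpow_neg, zpow_neg, zpow_neg, zpow_add_one₀ h0, zpow_sub_one₀ h0]
  have hx : q p ^ j ≠ 0 := zpow_ne_zero _ h0
  generalize q p ^ j = x at *
  generalize φ (Cas p ^ (n + 1) * Kz p j) = A at *
  generalize φ (Cas p ^ n * Kz p (j + 1)) = B at *
  generalize φ (Cas p ^ n * Kz p (j - 1)) = D at *
  generalize q p = y at *
  field_simp at h' ⊢
  linear_combination (-1) * h'

lemma slf_CK (p : ℕ) (hp : 2 ≤ p) (φ : Uq p →ₗ[ℂ] ℂ) (hF : ∀ u, φ (u * FF p) = φ (FF p * u))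
    (h0 : ∀ j, φ (Kz p j) = 0) (n : ℕ) (j : ℤ) (hj : ¬ (p : ℤ) ∣ j) :
    φ (Cas p ^ n * Kz p j) = 0 := by
  have key : ∀ n : ℕ, ∀ j : ℤ, (q p ^ j - q p ^ (-j)) * φ (Cas p ^ n * Kz p j) = 0 := by
    intro n
    induction n with
    | zero => intro j; rw [pow_zero, one_mul, h0, mul_zero]
    | succ n ih => intro j; rw [slf_rec p hp φ hF, ih, ih, add_zero]
  refine (mul_eq_zero.mp (key n j)).resolve_left fun h => hj ?_
  rw [← q_two_zpow p hp, two_mul, zpow_add₀ (q_ne p)]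
  nth_rewrite 1 [sub_eq_zero.mp h]
  rw [← zpow_add₀ (q_ne p)]; simp

/-- Vanishing criterion for forms symmetric with respect to `F` and `K`. -/
lemma slf_zero (p : ℕ) (hp : 2 ≤ p) (φ : Uq p →ₗ[ℂ] ℂ) (hF : ∀ u, φ (u * FF p) = φ (FF p * u))
    (hK : ∀ u, φ (u * KK p) = φ (KK p * u)) (h0 : ∀ j, φ (Kz p j) = 0)
    (hd : ∀ n : ℕ, n < p → ∀ j : ℤ, (p : ℤ) ∣ j → φ (FF p ^ n * EE p ^ n * Kz p j) = 0) :
    φ = 0 := by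
  have hw : ∀ n : ℕ, (∀ i < n, ∀ j : ℤ, φ (Cas p ^ i * Kz p j) = 0) → ∀ w ∈ WW p n, ∀ j : ℤ,
      φ (w * Kz p j) = 0 := by
    intro n hn w hw j
    induction hw using Submodule.span_induction with
    | mem x hx =>
      obtain ⟨i, d, h1, h2, rfl⟩ := hx
      rw [mul_assoc, ← Kz_add]; exact hn i h1 _
    | zero => simp
    | add a b _ _ ha hb => rw [add_mul, map_add, ha, hb, add_zero]
    | smul c a _ ha => rw [smul_mul_assoc, map_smul, ha, smul_zero]
  have hsplit : ∀ n : ℕ, (∀ i < n, ∀ j : ℤ, φ (Cas p ^ i * Kz p j) = 0) → ∀ j : ℤ,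
      hh p ^ n * φ (FF p ^ n * EE p ^ n * Kz p j) = φ (Cas p ^ n * Kz p j) := by
    intro n hn j
    have := hw n hn _ (FkEk p hp n) j
    rw [sub_mul, map_sub, smul_mul_assoc, map_smul, smul_eq_mul] at this
    exact sub_eq_zero.mp this
  have hC : ∀ n : ℕ, n < p → ∀ j : ℤ, φ (Cas p ^ n * Kz p j) = 0 := by
    intro n
    induction n using Nat.strong_induction_on with
    | _ n ih =>
      intro hn j
      by_cases hj : (p : ℤ) ∣ j
      · rw [← hsplit n (fun i hi => ih i hi (by omega)), hd n hn j hj, mul_zero]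
      · exact slf_CK p hp φ hF h0 n j hj
  have hC' : ∀ n : ℕ, n < p → ∀ j : ℤ, φ (FF p ^ n * EE p ^ n * Kz p j) = 0 := by
    intro n hn j
    have := hsplit n (fun i hi => hC i (by omega)) j
    rw [hC n hn] at this
    exact (mul_eq_zero.mp this).resolve_left (pow_ne_zero _ (hh_ne p hp))
  ext u
  have hu := PBW_span p hp u
  induction hu using Submodule.span_induction with
  | mem x hx =>
    obtain ⟨⟨m, n, j⟩, rfl⟩ := hx
    simp only [LinearMap.zero_apply]
    by_cases hm : p ≤ m
    · rw [pow_eq_zero_of_le hm (F_pow p)]; simp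
    by_cases hn : p ≤ n
    · rw [pow_eq_zero_of_le hn (E_pow p)]; simp
    by_cases hmn : m = n
    · subst hmn; exact hC' m (by omega) j
    · refine weight_zero_FE p hp φ hK m n j fun hdvd => ?_
      have := Int.eq_zero_of_abs_lt_dvd hdvd (by rw [abs_lt]; omega)
      omega
  | zero => simp
  | add a b _ _ ha hb => rw [map_add, ha, hb]; simp
  | smul c a _ ha => rw [map_smul, ha]; simp

variable {p : ℕ} {ρP : (α : ℂ) → (s : ℕ) → (Uq p →ₐ[ℂ] Matrix (PIdx p s) (PIdx p s) ℂ)}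

lemma G_FEK (hp : 2 ≤ p) (hP : IsPRep p ρP) (s : ℕ) (hs : 1 ≤ s) (hs' : s ≤ p - 1) (k : ℕ) (r : ℤ)
    (h : ∀ d : ℤ, |d| < k → ¬ (p : ℤ) ∣ d + r) :
    GOf p ρP s (FF p ^ k * EE p ^ k * Kz p r) = 0 := by
  have hw : ∀ w ∈ WW p k, GOf p ρP s (w * Kz p r) = 0 := by
    intro w hw
    induction hw using Submodule.span_induction with
    | mem x hx =>
      obtain ⟨i, d, h1, h2, rfl⟩ := hx
      rw [mul_assoc, ← Kz_add]
      refine G_CK hp hP s hs hs' _ _ ?_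
      by_cases hi : i = 0
      · exact Or.inl hi
      · refine Or.inr (h d ?_)
        omega
    | zero => simp
    | add a b _ _ ha hb => rw [add_mul, map_add, ha, hb, add_zero]
    | smul c a _ ha => rw [smul_mul_assoc, map_smul, ha, smul_zero]
  have := hw _ (FkEk p hp k)
  have h2 : GOf p ρP s (Cas p ^ k * Kz p r) = 0 := by
    refine G_CK hp hP s hs hs' _ _ ?_
    by_cases hk : k = 0
    · exact Or.inl hk
    · refine Or.inr ?_
      have := h 0 (by simp; omega)
      rwa [zero_add] at this
  rw [sub_mul, map_sub, h2, sub_zero, smul_mul_assoc, map_smul, smul_eq_mul] at this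
  exact (mul_eq_zero.mp this).resolve_left (pow_ne_zero _ (hh_ne p hp))

/-- the form `φ ⊗ ψ`. -/
def tens (φ ψ : Uq p →ₗ[ℂ] ℂ) : (Uq p ⊗[ℂ] Uq p) →ₗ[ℂ] ℂ :=
  (LinearMap.mul' ℂ ℂ).comp (TensorProduct.map φ ψ)

lemma tens_tmul (φ ψ : Uq p →ₗ[ℂ] ℂ) (a b : Uq p) : tens φ ψ (a ⊗ₜ b) = φ a * ψ b := by
  simp [tens]

lemma conv_eq (Δ : Uq p →ₐ[ℂ] (Uq p ⊗[ℂ] Uq p)) (φ ψ : Uq p →ₗ[ℂ] ℂ) (u : Uq p) :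
    conv p Δ φ ψ u = tens φ ψ (Δ u) := rfl

lemma Kinv_symm (φ : Uq p →ₗ[ℂ] ℂ) (hK : ∀ u, φ (u * KK p) = φ (KK p * u)) (u : Uq p) :
    φ (u * KKinv p) = φ (KKinv p * u) := by
  have := hK (KKinv p * u * KKinv p)
  rw [mul_assoc, Kinv_mul, mul_one, ← mul_assoc, ← mul_assoc, KKinv_mul, one_mul] at this
  exact this.symm

lemma conv_symm (Δ : Uq p →ₐ[ℂ] (Uq p ⊗[ℂ] Uq p)) (φ ψ : Uq p →ₗ[ℂ] ℂ) (y : Uq p)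
    (h : ∀ a b : Uq p, tens φ ψ ((a ⊗ₜ b) * Δ y) = tens φ ψ (Δ y * (a ⊗ₜ b))) (u : Uq p) :
    conv p Δ φ ψ (u * y) = conv p Δ φ ψ (y * u) := by
  rw [conv_eq, conv_eq, map_mul Δ, map_mul Δ]
  generalize Δ u = A
  induction A using TensorProduct.induction_on with
  | zero => simp
  | tmul a b => exact h a b
  | add a b ha hb => rw [add_mul, mul_add, map_add, map_add, ha, hb]

lemma Δ_Kz (Δ : Uq p →ₐ[ℂ] (Uq p ⊗[ℂ] Uq p)) (hΔ : IsCoprod p Δ) (j : ℤ) :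
    Δ (Kz p j) = Kz p j ⊗ₜ Kz p j := by
  induction j with
  | zero => simp [Kz_zero, Algebra.TensorProduct.one_def]
  | succ i ih =>
    rw [Kz_add, map_mul, ih, Kz_one, hΔ.2.2.1, Algebra.TensorProduct.tmul_mul_tmul]
  | pred i ih =>
    rw [sub_eq_add_neg, Kz_add, map_mul, ih, Kz_neg_one, hΔ.2.2.2,
      Algebra.TensorProduct.tmul_mul_tmul]

/-- Span containing `Δ(F^n)`. -/
def SF (p n : ℕ) : Submodule ℂ (Uq p ⊗[ℂ] Uq p) :=
  Submodule.span ℂ {x | ∃ k l : ℕ, k + l = n ∧ x = (FF p ^ k * Kz p (-l)) ⊗ₜ[ℂ] (FF p ^ l)}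

/-- Span containing `Δ(E^n)`. -/
def SE (p n : ℕ) : Submodule ℂ (Uq p ⊗[ℂ] Uq p) :=
  Submodule.span ℂ {x | ∃ k l : ℕ, k + l = n ∧ x = (EE p ^ k) ⊗ₜ[ℂ] (EE p ^ l * Kz p k)}

lemma Δ_Fn (Δ : Uq p →ₐ[ℂ] (Uq p ⊗[ℂ] Uq p)) (hΔ : IsCoprod p Δ) (n : ℕ) :
    Δ (FF p ^ n) ∈ SF p n := by
  induction n with
  | zero =>
    refine Submodule.subset_span ⟨0, 0, rfl, ?_⟩
    simp [Kz_zero, Algebra.TensorProduct.one_def]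
  | succ n ih =>
    rw [pow_succ', map_mul, hΔ.2.1]
    generalize Δ (FF p ^ n) = A at ih
    induction ih using Submodule.span_induction with
    | mem x hx =>
      obtain ⟨k, l, h1, rfl⟩ := hx
      rw [add_mul, Algebra.TensorProduct.tmul_mul_tmul, Algebra.TensorProduct.tmul_mul_tmul]
      refine Submodule.add_mem _ ?_ ?_
      · refine Submodule.subset_span ⟨k + 1, l, by omega, ?_⟩
        rw [one_mul, pow_succ', mul_assoc]
      · rw [← mul_assoc, ← Kz_neg_one, Kz_Fpow, smul_mul_assoc, ← TensorProduct.smul_tmul',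
          mul_assoc (FF p ^ k), ← Kz_add, ← pow_succ']
        refine Submodule.smul_mem _ _ (Submodule.subset_span ⟨k, l + 1, by omega, ?_⟩)
        congr 3
        push_cast; ring
    | zero => simp
    | add a b _ _ ha hb => rw [mul_add]; exact Submodule.add_mem _ ha hb
    | smul c a _ ha => rw [mul_smul_comm]; exact Submodule.smul_mem _ _ ha

lemma Δ_En (Δ : Uq p →ₐ[ℂ] (Uq p ⊗[ℂ] Uq p)) (hΔ : IsCoprod p Δ) (n : ℕ) :
    Δ (EE p ^ n) ∈ SE p n := by
  induction n with
  | zero =>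
    refine Submodule.subset_span ⟨0, 0, rfl, ?_⟩
    simp [Kz_zero, Algebra.TensorProduct.one_def]
  | succ n ih =>
    rw [pow_succ', map_mul, hΔ.1]
    generalize Δ (EE p ^ n) = A at ih
    induction ih using Submodule.span_induction with
    | mem x hx =>
      obtain ⟨k, l, h1, rfl⟩ := hx
      rw [add_mul, Algebra.TensorProduct.tmul_mul_tmul, Algebra.TensorProduct.tmul_mul_tmul]
      refine Submodule.add_mem _ ?_ ?_
      · refine Submodule.subset_span ⟨k, l + 1, by omega, ?_⟩
        rw [one_mul, pow_succ', mul_assoc]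
      · rw [← mul_assoc, ← Kz_one, Kz_Epow, smul_mul_assoc, TensorProduct.tmul_smul,
          mul_assoc (EE p ^ l), ← Kz_add, ← pow_succ']
        refine Submodule.smul_mem _ _ (Submodule.subset_span ⟨k + 1, l, by omega, ?_⟩)
        congr 3
        push_cast; ring
    | zero => simp
    | add a b _ _ ha hb => rw [mul_add]; exact Submodule.add_mem _ ha hb
    | smul c a _ ha => rw [mul_smul_comm]; exact Submodule.smul_mem _ _ ha

lemma conv_FE (hp : 2 ≤ p) (hP : IsPRep p ρP) (Δ : Uq p →ₐ[ℂ] (Uq p ⊗[ℂ] Uq p))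
    (hΔ : IsCoprod p Δ) (s t : ℕ) (hs : 1 ≤ s) (hs' : s ≤ p - 1) (ht : 1 ≤ t) (ht' : t ≤ p - 1)
    (n : ℕ) (hn : n < p) (j : ℤ) (hj : (p : ℤ) ∣ j) :
    conv p Δ (GOf p ρP s) (GOf p ρP t) (FF p ^ n * EE p ^ n * Kz p j) = 0 := by
  rw [conv_eq, map_mul Δ, map_mul Δ, Δ_Kz Δ hΔ]
  have hA := Δ_Fn Δ hΔ n
  have hB := Δ_En Δ hΔ n
  generalize Δ (FF p ^ n) = A at hA
  generalize Δ (EE p ^ n) = B at hB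
  induction hA using Submodule.span_induction with
  | zero => simp
  | add a b _ _ ha hb => rw [add_mul, add_mul, map_add, ha, hb, add_zero]
  | smul c a _ ha => rw [smul_mul_assoc, smul_mul_assoc, map_smul, ha, smul_zero]
  | mem x hx =>
    obtain ⟨k, l, h1, rfl⟩ := hx
    induction hB using Submodule.span_induction with
    | zero => simp
    | add a b _ _ ha hb => rw [mul_add, add_mul, map_add, ha, hb, add_zero]
    | smul c a _ ha => rw [mul_smul_comm, smul_mul_assoc, map_smul, ha, smul_zero]
    | mem x hx =>
      obtain ⟨k', l', h2, rfl⟩ := hx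
      rw [Algebra.TensorProduct.tmul_mul_tmul, Algebra.TensorProduct.tmul_mul_tmul, tens_tmul,
        mul_assoc (FF p ^ k), Kz_Epow, mul_smul_comm, smul_mul_assoc, map_smul, ← mul_assoc,
        mul_assoc _ (Kz p (-l)), ← Kz_add, ← mul_assoc, mul_assoc _ (Kz p k'), ← Kz_add]
      by_cases hk : k = k'
      · subst hk
        obtain rfl : l = l' := by omega
        rcases le_or_gt k l with hkl | hkl
        · rw [G_FEK hp hP s hs hs' k, smul_zero, zero_mul]
          intro d hd hdvd
          have h3 : (p : ℤ) ∣ d - l := by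
            have := dvd_sub hdvd hj
            rwa [show d + (-(l : ℤ) + j) - j = d - l by ring] at this
          rw [abs_lt] at hd
          have := Int.eq_zero_of_abs_lt_dvd h3 (by rw [abs_lt]; omega)
          omega
        · rw [G_FEK hp hP t ht ht' l, mul_zero]
          intro d hd hdvd
          have h3 : (p : ℤ) ∣ d + k := by
            have := dvd_sub hdvd hj
            rwa [show d + ((k : ℤ) + j) - j = d + k by ring] at this
          rw [abs_lt] at hd
          have := Int.eq_zero_of_abs_lt_dvd h3 (by rw [abs_lt]; omega)
          omega
      · rw [weight_zero_FE p hp _ (G_K hp hP s hs hs') k k', smul_zero, zero_mul]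
        intro hdvd
        have := Int.eq_zero_of_abs_lt_dvd hdvd (by rw [abs_lt]; omega)
        omega

lemma conv_zero (hp : 2 ≤ p) (hP : IsPRep p ρP) (Δ : Uq p →ₐ[ℂ] (Uq p ⊗[ℂ] Uq p))
    (hΔ : IsCoprod p Δ) (s t : ℕ) (hs : 1 ≤ s) (hs' : s ≤ p - 1) (ht : 1 ≤ t) (ht' : t ≤ p - 1) :
    conv p Δ (GOf p ρP s) (GOf p ρP t) = 0 := by
  have hKs := G_K hp hP s hs hs'
  have hKt := G_K hp hP t ht ht'
  have hFs := G_F hp hP s hs hs'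
  have hFt := G_F hp hP t ht ht'
  refine slf_zero p hp _ (conv_symm Δ _ _ _ ?_) (conv_symm Δ _ _ _ ?_) ?_ ?_
  · intro a b
    rw [hΔ.2.1, mul_add, add_mul, map_add, map_add]
    simp only [Algebra.TensorProduct.tmul_mul_tmul, tens_tmul, hFs, hFt, Kinv_symm _ hKs, mul_one,
      one_mul]
  · intro a b
    rw [hΔ.2.2.1]
    simp only [Algebra.TensorProduct.tmul_mul_tmul, tens_tmul, hKs, hKt]
  · intro j
    have := G_CK hp hP s hs hs' 0 j (Or.inl rfl)
    rw [pow_zero, one_mul] at this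
    rw [conv_eq, Δ_Kz Δ hΔ, tens_tmul, this, zero_mul]
  · exact conv_FE hp hP Δ hΔ s t hs hs' ht ht'

end final

/-- in `SLF(Ū_q)`, `G_s G_t = 0` for all `1 ≤ s, t ≤ p-1`. -/
theorem statement_15 (p : ℕ) (hp : 2 ≤ p)
    (ρP : (α : ℂ) → (s : ℕ) → (Uq p →ₐ[ℂ] Matrix (PIdx p s) (PIdx p s) ℂ))
    (hP : IsPRep p ρP)
    (Δ : Uq p →ₐ[ℂ] (Uq p ⊗[ℂ] Uq p)) (hΔ : IsCoprod p Δ) :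
    ∀ s t : ℕ, 1 ≤ s → s ≤ p - 1 → 1 ≤ t → t ≤ p - 1 →
      conv p Δ (GOf p ρP s) (GOf p ρP t) = 0 := by
  intro s t hs hs' ht ht'
  exact conv_zero hp hP Δ hΔ s t hs hs' ht ht'

end Uqsl2
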